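/- Let n ≥ 0 and m ≥ 1 be integers, 0 < λ < n+m, 1 < p ≤ q < ∞, and let α, β ∈ ℝ satisfy α < m/p', β < m/q, α + β ≥ 0 and 1/q = 1/p − (n+m−(α+β+λ))/(n+m). Then there exists a constant C > 0 such that for every nonnegative measurable function f on ℝ^{n+m}, (∫_{ℝ^{n+m}} |ŷ|^{−βq} (I_λ f(y,ŷ))^q dy dŷ)^{1/q} ≤ C · (∫_{ℝ^{n+m}} |x̂|^{αp} f(x,x̂)^p dx dx̂)^{1/p}, with both sides interpreted in [0,∞]. -/

import Mathlib

open MeasureTheory ENNReal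

noncomputable section

/-- The Euclidean distance `|(x,x̂)-(y,ŷ)|` on `ℝ^n × ℝ^m`. -/
def pDist {n m : ℕ} (X Y : EuclideanSpace ℝ (Fin n) × EuclideanSpace ℝ (Fin m)) : ℝ :=
  Real.sqrt (‖X.1 - Y.1‖ ^ 2 + ‖X.2 - Y.2‖ ^ 2)

/-- The Riesz potential `I_λ f (Y) = ∫_{ℝ^{n+m}} f(X) |X-Y|^{-λ} dX`, interpreted in
`[0,∞]`. -/
def Ilam (n m : ℕ) (lam : ℝ)
    (f : EuclideanSpace ℝ (Fin n) × EuclideanSpace ℝ (Fin m) → ℝ)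
    (Y : EuclideanSpace ℝ (Fin n) × EuclideanSpace ℝ (Fin m)) : ℝ≥0∞ :=
  ∫⁻ X, ENNReal.ofReal (f X) * ENNReal.ofReal (pDist X Y) ^ (-lam)

/-!
Put `r = |x̂|`, `s = |ŷ|` and `d = |X - Y|`. The claim is that the kernel `r ^ (-α) * s ^ (-β) *
d ^ (-λ)` maps `L^p` to `L^q`. It is enough to prove this for the sup norm on `ℝ^n × ℝ^m`,
which is at most the Euclidean norm.

* Far part `r ≤ 2 d`: here `d` is comparable to `max (|x - y|, r, s)`. With `d` replaced by this
  maximum, the kernel is `K₁ ^ (1 - 1 / p) * K₂ ^ (1 / q)`, where `K₁` has bounded integrals in `X`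
  and `K₂` in `Y`, and Schur's test applies.
* Near part `2 d ≤ r`: here `r` and `s` are comparable and `d ≤ r`, so the kernel is at most a
  multiple of `r ^ (-(α + β)) * d ^ (-λ)`. If `p < q` this is at most `d ^ (-(α + β + λ))`, the
  kernel of the Hardy–Littlewood–Sobolev inequality. If `p = q`, then `α + β + λ = n + m`, and the
  kernel has bounded integrals in either variable.

The Hardy–Littlewood–Sobolev inequality in bilinear form follows by integrating a pointwise bound:
with `w` the inverse of `|x - y|` to the power of the dimension, `f ^ a * h ^ b * w ^ (2 - a - b)`
is at most `f * h` plus the two terms obtained by replacing `h` with `min f w` and `f` with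
`min h w`. Each of these depends on one function only, and when `a + b > 1` its integral in the
other variable is a multiple of `f`, respectively `h`.
-/

open Module (finrank)

theorem antitone_rpow_of_nonpos {e : ℝ} (he : e ≤ 0) : Antitone fun x : ℝ≥0∞ => x ^ e := by
  intro x y hxy
  have h := ENNReal.inv_le_inv.2 (rpow_le_rpow hxy (neg_nonneg.2 he))
  rwa [← rpow_neg, ← rpow_neg, neg_neg] at h

theorem rpow_le_two_rpow_abs_mul_rpow {a b : ℝ≥0∞} (hab : a ≤ 2 * b) (hba : b ≤ 2 * a) (e : ℝ) :
    b ^ e ≤ 2 ^ |e| * a ^ e := by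
  rcases le_total 0 e with he | he
  · rw [abs_of_nonneg he, ← mul_rpow_of_nonneg _ _ he]
    exact rpow_le_rpow hba he
  · have h2 : (2 : ℝ≥0∞) ^ e ≠ 0 := by simp [rpow_eq_zero_iff]
    have h2' : (2 : ℝ≥0∞) ^ e ≠ ⊤ := by simp [rpow_eq_top_iff]
    rw [abs_of_nonpos he, rpow_neg, ← ENNReal.mul_le_iff_le_inv h2 h2']
    rcases eq_or_ne b ⊤ with rfl | hb
    · obtain rfl : a = ⊤ := by
        by_contra ha
        exact absurd hba (not_le.2 (mul_lt_top (by simp) (Ne.lt_top ha)))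
      rcases he.eq_or_lt with rfl | he <;> simp [*]
    · rw [← mul_rpow_of_ne_top (by simp) hb]
      exact antitone_rpow_of_nonpos he hab

section RadialIntegrals

theorem enorm_rpow_mul_max_one_rpow_le {E : Type*} [NormedAddCommGroup E] (y : E)
    {A τ : ℝ} (hAτ : A ≤ τ) :
    ‖y‖ₑ ^ A * max ‖y‖ₑ 1 ^ (-τ) ≤ (Metric.ball (0 : E) 1).indicator (‖·‖ₑ ^ A) y +
      2 ^ (τ - A) * ENNReal.ofReal ((1 + ‖y‖) ^ (-(τ - A))) := by
  by_cases hy : y ∈ Metric.ball (0 : E) 1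
  · have hy1 : ‖y‖ₑ ≤ 1 := by
      rw [← ofReal_norm]
      exact ofReal_le_one.2 (mem_ball_zero_iff.1 hy).le
    rw [max_eq_right hy1, one_rpow, mul_one, Set.indicator_of_mem hy]
    exact le_self_add
  · have hy1 : 1 ≤ ‖y‖ := not_lt.1 fun h => hy (mem_ball_zero_iff.2 h)
    have hy1' : 1 ≤ ‖y‖ₑ := by
      rw [← ofReal_norm]
      exact one_le_ofReal.2 hy1
    rw [max_eq_left hy1', ← rpow_add _ _ (one_pos.trans_le hy1').ne' enorm_ne_top,
      Set.indicator_of_notMem hy, zero_add, show A + -τ = -(τ - A) by ring]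
    have hcmp : ENNReal.ofReal (1 + ‖y‖) ≤ 2 * ‖y‖ₑ := by
      rw [← ofReal_norm, ← ofReal_ofNat, ← ofReal_mul zero_le_two]
      exact ofReal_le_ofReal (by linarith)
    have hcmp' : ‖y‖ₑ ≤ 2 * ENNReal.ofReal (1 + ‖y‖) := by
      rw [← ofReal_norm, ← ofReal_ofNat, ← ofReal_mul zero_le_two]
      exact ofReal_le_ofReal (by linarith)
    have h := rpow_le_two_rpow_abs_mul_rpow hcmp hcmp' (-(τ - A))
    rwa [abs_neg, abs_of_nonneg (sub_nonneg.2 hAτ),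
      ofReal_rpow_of_pos (by positivity : 0 < 1 + ‖y‖)] at h

variable {E : Type*} [NormedAddCommGroup E] [NormedSpace ℝ E] [FiniteDimensional ℝ E]
  [MeasurableSpace E] [BorelSpace E] (μ : Measure E) [μ.IsAddHaarMeasure]

theorem lintegral_ball_enorm_rpow_lt_top {A : ℝ} (hA : 0 ≤ A ∨ -(finrank ℝ E : ℝ) < A) :
    ∫⁻ y in Metric.ball (0 : E) 1, ‖y‖ₑ ^ A ∂μ < ⊤ := by
  rcases le_or_gt 0 A with hA0 | hA0
  · calc ∫⁻ y in Metric.ball (0 : E) 1, ‖y‖ₑ ^ A ∂μ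
        ≤ ∫⁻ _ in Metric.ball (0 : E) 1, 1 ∂μ := by
          refine setLIntegral_mono measurable_const fun y hy => rpow_le_one ?_ hA0
          rw [← ofReal_norm]
          exact ofReal_le_one.2 (mem_ball_zero_iff.1 hy).le
      _ < ⊤ := by simpa using measure_ball_lt_top
  · have hAN : -(finrank ℝ E : ℝ) < A := hA.resolve_left hA0.not_ge
    have hN : 0 < finrank ℝ E := by
      have : (0 : ℝ) < finrank ℝ E := by linarith
      exact_mod_cast this
    have : Nontrivial E := Module.nontrivial_of_finrank_pos hN
    have hint : IntegrableOn (fun y : E => ‖y‖ ^ A) (Metric.ball 0 1) μ :=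
      integrableOn_ball_of_norm_le_rpow (α := -A) (C := 1) hN (by linarith)
        (.of_forall fun y => by simp [abs_of_nonneg (Real.rpow_nonneg (norm_nonneg y) A)])
        (measurable_norm.pow_const A).aestronglyMeasurable
    refine lt_of_eq_of_lt (lintegral_congr_ae ?_) hint.2
    filter_upwards [ae_restrict_of_ae (Measure.ae_ne μ (0 : E))] with y hy
    rw [← ofReal_norm, ofReal_rpow_of_pos (norm_pos_iff.2 hy),
      Real.enorm_of_nonneg (Real.rpow_nonneg (norm_nonneg y) A)]

theorem lintegral_enorm_rpow_mul_max_one_rpow_lt_top {A τ : ℝ}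
    (hA : 0 ≤ A ∨ -(finrank ℝ E : ℝ) < A) (hτ : A + finrank ℝ E < τ) :
    ∫⁻ y, ‖y‖ₑ ^ A * max ‖y‖ₑ 1 ^ (-τ) ∂μ < ⊤ := by
  have hAτ : A ≤ τ := by
    have : (0 : ℝ) ≤ finrank ℝ E := Nat.cast_nonneg _
    linarith
  calc ∫⁻ y, ‖y‖ₑ ^ A * max ‖y‖ₑ 1 ^ (-τ) ∂μ
      ≤ ∫⁻ y, ((Metric.ball (0 : E) 1).indicator (‖·‖ₑ ^ A) y +
          2 ^ (τ - A) * ENNReal.ofReal ((1 + ‖y‖) ^ (-(τ - A)))) ∂μ :=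
        lintegral_mono fun y => enorm_rpow_mul_max_one_rpow_le y hAτ
    _ = ∫⁻ y in Metric.ball (0 : E) 1, ‖y‖ₑ ^ A ∂μ +
          2 ^ (τ - A) * ∫⁻ y : E, ENNReal.ofReal ((1 + ‖y‖) ^ (-(τ - A))) ∂μ := by
        rw [lintegral_add_left ((measurable_enorm.pow_const A).indicator measurableSet_ball),
          lintegral_indicator measurableSet_ball, lintegral_const_mul _ (by fun_prop)]
    _ < ⊤ := add_lt_top.2 ⟨lintegral_ball_enorm_rpow_lt_top μ hA,
        mul_lt_top (by simp [lt_top_iff_ne_top, rpow_eq_top_iff])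
          (finite_integral_one_add_norm (by linarith))⟩

theorem lintegral_enorm_rpow_mul_max_rpow_eq (A τ : ℝ) {ρ : ℝ≥0∞} (hρ0 : ρ ≠ 0) (hρ : ρ ≠ ⊤) :
    ∫⁻ y, ‖y‖ₑ ^ A * max ‖y‖ₑ ρ ^ (-τ) ∂μ =
      ρ ^ (A + finrank ℝ E - τ) * ∫⁻ y, ‖y‖ₑ ^ A * max ‖y‖ₑ 1 ^ (-τ) ∂μ := by
  obtain ⟨r, hr, rfl⟩ : ∃ r : ℝ, 0 < r ∧ ENNReal.ofReal r = ρ :=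
    ⟨ρ.toReal, toReal_pos hρ0 hρ, ofReal_toReal hρ⟩
  set ρ := ENNReal.ofReal r
  have hscale : ∀ y : E, ‖r • y‖ₑ ^ A * max ‖r • y‖ₑ ρ ^ (-τ) =
      ρ ^ (A - τ) * (‖y‖ₑ ^ A * max ‖y‖ₑ 1 ^ (-τ)) := fun y => by
    have hmax : max (ρ * ‖y‖ₑ) ρ = ρ * max ‖y‖ₑ 1 := by rw [mul_max, mul_one]
    rw [enorm_smul, Real.enorm_of_nonneg hr.le, hmax, mul_rpow_of_ne_top hρ enorm_ne_top,
      mul_rpow_of_ne_top hρ (by simp), sub_eq_add_neg, rpow_add _ _ hρ0 hρ]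
    ring
  have hmap : ∫⁻ y, ‖y‖ₑ ^ A * max ‖y‖ₑ ρ ^ (-τ) ∂(μ.map (r • ·)) =
      ρ ^ (-(finrank ℝ E : ℝ)) * ∫⁻ y, ‖y‖ₑ ^ A * max ‖y‖ₑ ρ ^ (-τ) ∂μ := by
    rw [Measure.map_addHaar_smul μ hr.ne', lintegral_smul_measure, smul_eq_mul, rpow_neg,
      rpow_natCast, abs_of_pos (by positivity), ofReal_inv_of_pos (by positivity),
      ofReal_pow hr.le]
  have hN : ρ ^ (finrank ℝ E : ℝ) * ρ ^ (-(finrank ℝ E : ℝ)) = 1 := by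
    rw [← rpow_add _ _ hρ0 hρ, add_neg_cancel, rpow_zero]
  calc ∫⁻ y, ‖y‖ₑ ^ A * max ‖y‖ₑ ρ ^ (-τ) ∂μ
      = ρ ^ (finrank ℝ E : ℝ) * ∫⁻ y, ‖y‖ₑ ^ A * max ‖y‖ₑ ρ ^ (-τ) ∂(μ.map (r • ·)) := by
        rw [hmap, ← mul_assoc, hN, one_mul]
    _ = ρ ^ (finrank ℝ E : ℝ) * (ρ ^ (A - τ) * ∫⁻ y, ‖y‖ₑ ^ A * max ‖y‖ₑ 1 ^ (-τ) ∂μ) := by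
        rw [lintegral_map (by fun_prop) (measurable_const_smul r), lintegral_congr hscale,
          lintegral_const_mul _ (by fun_prop)]
    _ = _ := by
        rw [← mul_assoc, ← rpow_add _ _ hρ0 hρ]
        ring_nf

theorem exists_lintegral_enorm_rpow_mul_max_rpow_eq {A τ : ℝ}
    (hA : 0 ≤ A ∨ -(finrank ℝ E : ℝ) < A) (hτ : A + finrank ℝ E < τ) :
    ∃ C : ℝ≥0∞, C ≠ ⊤ ∧ ∀ ρ : ℝ≥0∞, ρ ≠ 0 → ρ ≠ ⊤ →
      ∫⁻ y, ‖y‖ₑ ^ A * max ‖y‖ₑ ρ ^ (-τ) ∂μ = ρ ^ (A + finrank ℝ E - τ) * C :=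
  ⟨_, (lintegral_enorm_rpow_mul_max_one_rpow_lt_top μ hA hτ).ne,
    fun _ => lintegral_enorm_rpow_mul_max_rpow_eq μ A τ⟩

end RadialIntegrals

section StrongType

variable {X Y : Type*} [MeasurableSpace X] [MeasurableSpace Y] {μ : Measure X} {ν : Measure Y}
  {p q : ℝ} {K K' : X → Y → ℝ≥0∞}

/-- The integral operator with nonnegative kernel `K` is of strong type `(p, q)`, i.e. bounded from
`L^p(μ)` to `L^q(ν)`. It suffices to test it on nonnegative functions, so both sides are read in
`[0, ∞]`. -/
def IsStrongType (μ : Measure X) (ν : Measure Y) (p q : ℝ) (K : X → Y → ℝ≥0∞) : Prop :=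
  ∃ C : ℝ≥0∞, C ≠ ⊤ ∧ ∀ f : X → ℝ≥0∞, Measurable f →
    (∫⁻ y, (∫⁻ x, f x * K x y ∂μ) ^ q ∂ν) ^ (1 / q) ≤ C * (∫⁻ x, f x ^ p ∂μ) ^ (1 / p)

theorem IsStrongType.mono (hq : 0 ≤ q) (hK' : IsStrongType μ ν p q K')
    (hle : ∀ᵐ y ∂ν, ∀ᵐ x ∂μ, K x y ≤ K' x y) : IsStrongType μ ν p q K := by
  obtain ⟨C, hC, hbound⟩ := hK'
  refine ⟨C, hC, fun f hf => le_trans (rpow_le_rpow (lintegral_mono_ae ?_) (by positivity))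
    (hbound f hf)⟩
  filter_upwards [hle] with y hy
  exact rpow_le_rpow (lintegral_mono_ae (hy.mono fun x hx => mul_le_mul_right hx (f x))) hq

theorem lintegral_rpow_lintegral_const_mul (hq : 0 < q) {c : ℝ≥0∞} (hc : c ≠ ⊤) :
    (∫⁻ y, (∫⁻ x, c * K x y ∂μ) ^ q ∂ν) ^ (1 / q) =
      c * (∫⁻ y, (∫⁻ x, K x y ∂μ) ^ q ∂ν) ^ (1 / q) := by
  simp only [lintegral_const_mul' c _ hc, mul_rpow_of_nonneg _ _ hq.le]
  rw [lintegral_const_mul' _ _ (rpow_ne_top_of_nonneg hq.le hc),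
    mul_rpow_of_nonneg _ _ (by positivity), one_div, rpow_rpow_inv hq.ne']

theorem IsStrongType.const_mul (hq : 0 < q) (hK : IsStrongType μ ν p q K) {c : ℝ≥0∞}
    (hc : c ≠ ⊤) : IsStrongType μ ν p q fun x y => c * K x y := by
  obtain ⟨C, hC, hbound⟩ := hK
  refine ⟨c * C, mul_ne_top hc hC, fun f hf => ?_⟩
  simp only [mul_left_comm]
  rw [lintegral_rpow_lintegral_const_mul hq hc, mul_assoc]
  exact mul_le_mul_right (hbound f hf) c

theorem IsStrongType.add [SFinite μ] (hq : 1 ≤ q) (hKm : Measurable (Function.uncurry K))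
    (hK'm : Measurable (Function.uncurry K')) (hK : IsStrongType μ ν p q K)
    (hK' : IsStrongType μ ν p q K') : IsStrongType μ ν p q fun x y => K x y + K' x y := by
  obtain ⟨C, hC, hbound⟩ := hK
  obtain ⟨C', hC', hbound'⟩ := hK'
  refine ⟨C + C', add_ne_top.2 ⟨hC, hC'⟩, fun f hf => ?_⟩
  have hmeas : ∀ {L : X → Y → ℝ≥0∞}, Measurable (Function.uncurry L) →
      Measurable fun y => ∫⁻ x, f x * L x y ∂μ := fun hL =>
    ((hf.comp measurable_fst).mul hL).lintegral_prod_left'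
  have hsplit : ∀ y, ∫⁻ x, f x * (K x y + K' x y) ∂μ =
      ∫⁻ x, f x * K x y ∂μ + ∫⁻ x, f x * K' x y ∂μ := fun y => by
    simp only [mul_add]
    exact lintegral_add_left (hf.mul hKm.of_uncurry_right) _
  calc (∫⁻ y, (∫⁻ x, f x * (K x y + K' x y) ∂μ) ^ q ∂ν) ^ (1 / q)
      ≤ (∫⁻ y, (∫⁻ x, f x * K x y ∂μ) ^ q ∂ν) ^ (1 / q) +
          (∫⁻ y, (∫⁻ x, f x * K' x y ∂μ) ^ q ∂ν) ^ (1 / q) := by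
        simp only [hsplit]
        exact lintegral_Lp_add_le (hmeas hKm).aemeasurable (hmeas hK'm).aemeasurable hq
    _ ≤ (C + C') * (∫⁻ x, f x ^ p ∂μ) ^ (1 / p) := by
        rw [add_mul]
        exact add_le_add (hbound f hf) (hbound' f hf)

theorem IsStrongType.exists_ofReal_weighted (hp : 0 ≤ p) (hq : 0 < q) {α β : ℝ} {w : X → ℝ≥0∞}
    {v : Y → ℝ≥0∞} (hwm : Measurable w) (hw : ∀ᵐ x ∂μ, w x ≠ 0 ∧ w x ≠ ⊤)
    (hv : ∀ᵐ y ∂ν, v y ≠ 0 ∧ v y ≠ ⊤)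
    (hK : IsStrongType μ ν p q fun x y => w x ^ (-α) * v y ^ (-β) * K x y) :
    ∃ C : ℝ, 0 < C ∧ ∀ f : X → ℝ≥0∞, Measurable f →
      (∫⁻ y, v y ^ (-(β * q)) * (∫⁻ x, f x * K x y ∂μ) ^ q ∂ν) ^ (1 / q) ≤
        ENNReal.ofReal C * (∫⁻ x, w x ^ (α * p) * f x ^ p ∂μ) ^ (1 / p) := by
  obtain ⟨C, hC, hbound⟩ := hK
  refine ⟨C.toReal + 1, by positivity, fun f hf => ?_⟩
  have hout : ∫⁻ y, v y ^ (-(β * q)) * (∫⁻ x, f x * K x y ∂μ) ^ q ∂ν =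
      ∫⁻ y, (∫⁻ x, w x ^ α * f x * (w x ^ (-α) * v y ^ (-β) * K x y) ∂μ) ^ q ∂ν := by
    refine lintegral_congr_ae ?_
    filter_upwards [hv] with y hy
    have hcancel : ∀ᵐ x ∂μ, w x ^ α * f x * (w x ^ (-α) * v y ^ (-β) * K x y) =
        v y ^ (-β) * (f x * K x y) := hw.mono fun x hx => by
      have hwx : w x ^ α * w x ^ (-α) = 1 := by
        rw [← rpow_add _ _ hx.1 hx.2, add_neg_cancel, rpow_zero]
      rw [← one_mul (v y ^ (-β) * _), ← hwx]
      ring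
    have hvy : v y ^ (-β) ≠ ⊤ := by simp [rpow_eq_top_iff, hy.1, hy.2]
    rw [lintegral_congr_ae hcancel, lintegral_const_mul' _ _ hvy, mul_rpow_of_nonneg _ _ hq.le,
      ← rpow_mul, neg_mul]
  have hin : ∫⁻ x, w x ^ (α * p) * f x ^ p ∂μ = ∫⁻ x, (w x ^ α * f x) ^ p ∂μ := by
    simp only [mul_rpow_of_nonneg _ _ hp, ← rpow_mul]
  have hCle : C ≤ ENNReal.ofReal (C.toReal + 1) :=
    (le_ofReal_iff_toReal_le hC (by positivity)).2 (by linarith)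
  rw [hout, hin]
  exact (hbound _ (by fun_prop)).trans (mul_le_mul_left hCle _)

end StrongType

section SchurTest

variable {X Y : Type*} [MeasurableSpace X] [MeasurableSpace Y] {μ : Measure X} {ν : Measure Y}
  {p q : ℝ} {K K₁ K₂ : X → Y → ℝ≥0∞}

theorem lintegral_rpow_mul_rpow_mul_rpow_le {f g h : X → ℝ≥0∞} (hf : AEMeasurable f μ)
    (hg : AEMeasurable g μ) (hh : AEMeasurable h μ) {a b c : ℝ} (ha : 0 ≤ a) (hb : 0 ≤ b)
    (hc : 0 ≤ c) (habc : a + b + c = 1) :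
    ∫⁻ x, f x ^ a * g x ^ b * h x ^ c ∂μ ≤
      (∫⁻ x, f x ∂μ) ^ a * (∫⁻ x, g x ∂μ) ^ b * (∫⁻ x, h x ∂μ) ^ c := by
  have H := lintegral_prod_norm_pow_le (μ := μ) (f := ![f, g, h]) Finset.univ
    (p := ![a, b, c]) (by simp [Fin.forall_fin_succ, hf, hg, hh])
    (by simpa [Fin.sum_univ_succ, add_assoc] using habc) (by simp [Fin.forall_fin_succ, ha, hb, hc])
  simpa [Fin.prod_univ_succ, mul_assoc] using H

theorem lintegral_mul_rpow_mul_rpow_rpow_le (hp : 1 ≤ p) (hpq : p ≤ q) {f k₁ k₂ : X → ℝ≥0∞}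
    (hf : Measurable f) (hk₁ : Measurable k₁) (hk₂ : Measurable k₂) :
    (∫⁻ x, f x * (k₁ x ^ (1 - 1 / p) * k₂ x ^ (1 / q)) ∂μ) ^ q ≤
      (∫⁻ x, f x ^ p * k₂ x ∂μ) * (∫⁻ x, f x ^ p ∂μ) ^ (q / p - 1) *
        (∫⁻ x, k₁ x ∂μ) ^ (q * (1 - 1 / p)) := by
  have hp0 : 0 < p := by linarith
  have hq0 : 0 < q := by linarith
  have hP : 0 ≤ 1 - 1 / p := sub_nonneg.2 ((div_le_one hp0).2 hp)
  have hPQ : 0 ≤ 1 / p - 1 / q := sub_nonneg.2 (one_div_le_one_div_of_le hp0 hpq)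
  have hsplit : ∀ x, f x * (k₁ x ^ (1 - 1 / p) * k₂ x ^ (1 / q)) =
      (f x ^ p * k₂ x) ^ (1 / q) * (f x ^ p) ^ (1 / p - 1 / q) * k₁ x ^ (1 - 1 / p) := fun x => by
    have hfx : (f x ^ p) ^ (1 / q) * (f x ^ p) ^ (1 / p - 1 / q) = f x := by
      rw [← rpow_add_of_nonneg _ _ (by positivity) hPQ, add_sub_cancel, one_div,
        rpow_rpow_inv hp0.ne']
    rw [mul_rpow_of_nonneg _ _ (by positivity : 0 ≤ 1 / q)]
    nth_rw 1 [← hfx]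
    ring
  simp only [hsplit]
  calc (∫⁻ x, (f x ^ p * k₂ x) ^ (1 / q) * (f x ^ p) ^ (1 / p - 1 / q) *
        k₁ x ^ (1 - 1 / p) ∂μ) ^ q
      ≤ ((∫⁻ x, f x ^ p * k₂ x ∂μ) ^ (1 / q) * (∫⁻ x, f x ^ p ∂μ) ^ (1 / p - 1 / q) *
          (∫⁻ x, k₁ x ∂μ) ^ (1 - 1 / p)) ^ q :=
        rpow_le_rpow (lintegral_rpow_mul_rpow_mul_rpow_le (by fun_prop) (by fun_prop)
          (by fun_prop) (by positivity) hPQ hP (by ring)) hq0.le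
    _ = _ := by
        rw [mul_rpow_of_nonneg _ _ hq0.le, mul_rpow_of_nonneg _ _ hq0.le, ← rpow_mul, ← rpow_mul,
          ← rpow_mul, one_div_mul_cancel hq0.ne', rpow_one,
          show (1 / p - 1 / q) * q = q / p - 1 by field_simp, mul_comm (1 - 1 / p)]

theorem lintegral_lintegral_mul_le [SFinite μ] [SFinite ν] {g : X → ℝ≥0∞} (hg : Measurable g)
    (hK : Measurable (Function.uncurry K)) {c : ℝ≥0∞} (hc : ∀ᵐ x ∂μ, ∫⁻ y, K x y ∂ν ≤ c) :
    ∫⁻ y, ∫⁻ x, g x * K x y ∂μ ∂ν ≤ c * ∫⁻ x, g x ∂μ := by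
  rw [lintegral_lintegral_swap ((hg.comp measurable_snd).mul
    (hK.comp measurable_swap)).aemeasurable, ← lintegral_const_mul _ hg]
  refine lintegral_mono_ae (hc.mono fun x hx => ?_)
  rw [lintegral_const_mul _ hK.of_uncurry_left, mul_comm]
  exact mul_le_mul_left hx _

theorem isStrongType_rpow_mul_rpow [SFinite μ] [SFinite ν] (hp : 1 ≤ p) (hpq : p ≤ q)
    (hK₁ : Measurable (Function.uncurry K₁)) (hK₂ : Measurable (Function.uncurry K₂))
    {c₁ c₂ : ℝ≥0∞} (hc₁ : c₁ ≠ ⊤) (hc₂ : c₂ ≠ ⊤) (hK₁le : ∀ᵐ y ∂ν, ∫⁻ x, K₁ x y ∂μ ≤ c₁)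
    (hK₂le : ∀ᵐ x ∂μ, ∫⁻ y, K₂ x y ∂ν ≤ c₂) :
    IsStrongType μ ν p q fun x y => K₁ x y ^ (1 - 1 / p) * K₂ x y ^ (1 / q) := by
  have hp0 : 0 < p := by linarith
  have hq0 : 0 < q := by linarith
  have hP : 0 ≤ 1 - 1 / p := sub_nonneg.2 ((div_le_one hp0).2 hp)
  have hqp : 0 ≤ q / p - 1 := sub_nonneg.2 ((one_le_div hp0).2 hpq)
  refine ⟨c₂ ^ (1 / q) * c₁ ^ (1 - 1 / p), mul_ne_top (rpow_ne_top_of_nonneg (by positivity) hc₂)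
    (rpow_ne_top_of_nonneg hP hc₁), fun f hf => ?_⟩
  set I := ∫⁻ x, f x ^ p ∂μ
  have hTonelli : ∫⁻ y, ∫⁻ x, f x ^ p * K₂ x y ∂μ ∂ν ≤ c₂ * I :=
    lintegral_lintegral_mul_le (hf.pow_const p) hK₂ hK₂le
  have hpow : ∫⁻ y, (∫⁻ x, f x * (K₁ x y ^ (1 - 1 / p) * K₂ x y ^ (1 / q)) ∂μ) ^ q ∂ν ≤
      c₂ * I * (I ^ (q / p - 1) * c₁ ^ (q * (1 - 1 / p))) := by
    refine (lintegral_mono_ae (hK₁le.mono fun y hy => (lintegral_mul_rpow_mul_rpow_rpow_le hp hpq hf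
      hK₁.of_uncurry_right hK₂.of_uncurry_right).trans ?_)).trans
      ((lintegral_mul_const _ ?_).trans_le (mul_le_mul_left hTonelli _))
    · rw [mul_assoc]
      gcongr
    · exact (((hf.comp measurable_fst).pow_const p).mul hK₂).lintegral_prod_left'
  have hI : I * I ^ (q / p - 1) = I ^ (q / p) := by
    conv_lhs => rw [← rpow_one I, ← rpow_mul, one_mul]
    rw [← rpow_add_of_nonneg _ _ zero_le_one hqp, add_sub_cancel]
  refine (rpow_le_rpow hpow (by positivity)).trans_eq ?_
  rw [show c₂ * I * (I ^ (q / p - 1) * c₁ ^ (q * (1 - 1 / p))) =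
    c₂ * I ^ (q / p) * c₁ ^ (q * (1 - 1 / p)) by rw [← hI]; ring,
    mul_rpow_of_nonneg _ _ (by positivity), mul_rpow_of_nonneg _ _ (by positivity), ← rpow_mul,
    ← rpow_mul, show q / p * (1 / q) = 1 / p by field_simp,
    show q * (1 - 1 / p) * (1 / q) = 1 - 1 / p by field_simp]
  ring

theorem isStrongType_min [SFinite μ] [SFinite ν] (hp : 1 ≤ p)
    (hK₁ : Measurable (Function.uncurry K₁)) (hK₂ : Measurable (Function.uncurry K₂))
    {c₁ c₂ : ℝ≥0∞} (hc₁ : c₁ ≠ ⊤) (hc₂ : c₂ ≠ ⊤) (hK₁le : ∀ᵐ y ∂ν, ∫⁻ x, K₁ x y ∂μ ≤ c₁)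
    (hK₂le : ∀ᵐ x ∂μ, ∫⁻ y, K₂ x y ∂ν ≤ c₂) :
    IsStrongType μ ν p p fun x y => min (K₁ x y) (K₂ x y) := by
  have hp0 : 0 ≤ p := by linarith
  have hP : 0 ≤ 1 - 1 / p := sub_nonneg.2 ((div_le_one (by linarith)).2 hp)
  refine (isStrongType_rpow_mul_rpow hp le_rfl hK₁ hK₂ hc₁ hc₂ hK₁le hK₂le).mono hp0
    (.of_forall fun y => .of_forall fun x => ?_)
  calc min (K₁ x y) (K₂ x y)
      = min (K₁ x y) (K₂ x y) ^ (1 - 1 / p) * min (K₁ x y) (K₂ x y) ^ (1 / p) := by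
        rw [← rpow_add_of_nonneg _ _ hP (by positivity), sub_add_cancel, rpow_one]
    _ ≤ K₁ x y ^ (1 - 1 / p) * K₂ x y ^ (1 / p) := by
        gcongr
        · exact min_le_left _ _
        · exact min_le_right _ _

end SchurTest

section Duality

variable {X Y : Type*} [MeasurableSpace X] [MeasurableSpace Y] {μ : Measure X} {ν : Measure Y}
  {p q s : ℝ} {K : X → Y → ℝ≥0∞}

theorem exists_measurable_le_lintegral_lt_top [SigmaFinite ν] (g : Y → ℝ≥0∞) {L : ℝ≥0∞}
    (hL : L < ∫⁻ y, g y ∂ν) :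
    ∃ ψ : Y → ℝ≥0∞, Measurable ψ ∧ ψ ≤ g ∧ ∫⁻ y, ψ y ∂ν < ⊤ ∧ L < ∫⁻ y, ψ y ∂ν := by
  simp only [lintegral_eq_nnreal g, lt_iSup_iff] at hL
  obtain ⟨φ, hφg, hLφ⟩ := hL
  rw [← SimpleFunc.lintegral_eq_lintegral] at hLφ
  obtain ⟨ψ, hψφ, hψ, hLψ⟩ := SimpleFunc.exists_lt_lintegral_simpleFunc_of_lt_lintegral hLφ
  exact ⟨fun y => ψ y, ψ.measurable.coe_nnreal_ennreal,
    fun y => (coe_le_coe.2 (hψφ y)).trans (hφg y), hψ, hLψ⟩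

theorem rpow_lintegral_le_of_le_rpow (hqs : q.HolderConjugate s) {g ψ : Y → ℝ≥0∞} {c : ℝ≥0∞}
    (hc : ∀ h : Y → ℝ≥0∞, Measurable h → ∫⁻ y, h y ^ s ∂ν ≤ 1 → ∫⁻ y, g y * h y ∂ν ≤ c)
    (hψ : Measurable ψ) (hψg : ∀ y, ψ y ≤ g y ^ q) (hψtop : ∫⁻ y, ψ y ∂ν ≠ ⊤) :
    (∫⁻ y, ψ y ∂ν) ^ (1 / q) ≤ c := by
  have hq := hqs.pos
  have hs := hqs.symm.pos
  have hsum : 1 / q + 1 / s = 1 := by simpa only [one_div] using hqs.inv_add_inv_eq_one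
  set M := ∫⁻ y, ψ y ∂ν
  rcases eq_or_ne M 0 with hM | hM
  · simp [hM, hq]
  have hunit : ∫⁻ y, (ψ y ^ (1 / s) * M ^ (-(1 / s))) ^ s ∂ν ≤ 1 := by
    have hpow : ∀ y, (ψ y ^ (1 / s) * M ^ (-(1 / s))) ^ s = ψ y * M⁻¹ := fun y => by
      rw [mul_rpow_of_nonneg _ _ hs.le, ← rpow_mul, ← rpow_mul, one_div_mul_cancel hs.ne',
        neg_mul, one_div_mul_cancel hs.ne', rpow_one, rpow_neg_one]
    rw [lintegral_congr hpow, lintegral_mul_const _ hψ, ENNReal.mul_inv_cancel hM hψtop]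
  calc M ^ (1 / q) = ∫⁻ y, ψ y ^ (1 / q) * (ψ y ^ (1 / s) * M ^ (-(1 / s))) ∂ν := by
        simp only [← mul_assoc, ← rpow_add_of_nonneg _ _ (one_div_nonneg.2 hq.le)
          (one_div_nonneg.2 hs.le), hsum, rpow_one]
        rw [lintegral_mul_const _ hψ, show 1 / q = 1 + -(1 / s) by linarith,
          rpow_add _ _ hM hψtop, rpow_one]
    _ ≤ ∫⁻ y, g y * (ψ y ^ (1 / s) * M ^ (-(1 / s))) ∂ν := by
        gcongr with y
        rw [one_div, rpow_inv_le_iff hq]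
        exact hψg y
    _ ≤ c := hc _ (by fun_prop) hunit

theorem rpow_lintegral_rpow_le_of_forall_lintegral_mul_le [SigmaFinite ν]
    (hqs : q.HolderConjugate s) {g : Y → ℝ≥0∞} {c : ℝ≥0∞}
    (hc : ∀ h : Y → ℝ≥0∞, Measurable h → ∫⁻ y, h y ^ s ∂ν ≤ 1 → ∫⁻ y, g y * h y ∂ν ≤ c) :
    (∫⁻ y, g y ^ q ∂ν) ^ (1 / q) ≤ c := by
  rw [one_div, rpow_inv_le_iff hqs.pos]
  by_contra! hlt
  obtain ⟨ψ, hψ, hψg, hψtop, hcψ⟩ := exists_measurable_le_lintegral_lt_top _ hlt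
  have h := rpow_lintegral_le_of_le_rpow hqs hc hψ hψg hψtop.ne
  rw [one_div, rpow_inv_le_iff hqs.pos] at h
  exact hcψ.not_ge h

theorem isStrongType_of_forall_lintegral_rpow_le_one (hp : 0 < p) (hq : 0 < q) {C : ℝ≥0∞}
    (hC : C ≠ ⊤) (hbound : ∀ f : X → ℝ≥0∞, Measurable f → ∫⁻ x, f x ^ p ∂μ ≤ 1 →
      (∫⁻ y, (∫⁻ x, f x * K x y ∂μ) ^ q ∂ν) ^ (1 / q) ≤ C) : IsStrongType μ ν p q K := by
  have hC1 : C + 1 ≠ ⊤ := add_ne_top.2 ⟨hC, one_ne_top⟩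
  refine ⟨C + 1, hC1, fun f hf => le_mul_of_forall_lt (.inl (by simp)) (.inl hC1)
    fun a ha t ht => ?_⟩
  have hCa : C ≤ a := le_self_add.trans ha.le
  have ht0 : t ≠ 0 := (pos_of_gt ht).ne'
  rcases eq_or_ne t ⊤ with rfl | htop
  · simp [mul_top (pos_of_gt ha).ne']
  have hnorm : ∫⁻ x, (t⁻¹ * f x) ^ p ∂μ ≤ 1 := by
    simp only [mul_rpow_of_nonneg _ _ hp.le]
    rw [lintegral_const_mul _ (hf.pow_const p), inv_rpow, mul_comm, ← div_eq_mul_inv]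
    refine div_le_of_le_mul ?_
    rw [one_mul, ← rpow_inv_le_iff hp, ← one_div]
    exact ht.le
  have h := hbound _ (hf.const_mul t⁻¹) hnorm
  simp only [mul_assoc] at h
  rw [lintegral_rpow_lintegral_const_mul hq (inv_ne_top.2 ht0), mul_comm, ← div_eq_mul_inv,
    ENNReal.div_le_iff ht0 htop] at h
  exact h.trans (mul_le_mul_left hCa t)

theorem isStrongType_of_bilinear_le [SigmaFinite ν] (hp : 0 < p) (hqs : q.HolderConjugate s)
    {C : ℝ≥0∞} (hC : C ≠ ⊤)
    (hbound : ∀ (f : X → ℝ≥0∞) (h : Y → ℝ≥0∞), Measurable f → Measurable h →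
      ∫⁻ x, f x ^ p ∂μ ≤ 1 → ∫⁻ y, h y ^ s ∂ν ≤ 1 →
      ∫⁻ y, (∫⁻ x, f x * K x y ∂μ) * h y ∂ν ≤ C) : IsStrongType μ ν p q K :=
  isStrongType_of_forall_lintegral_rpow_le_one hp hqs.pos hC fun f hf hf1 =>
    rpow_lintegral_rpow_le_of_forall_lintegral_mul_le hqs fun h hh hh1 =>
      hbound f h hf hh hf1 hh1

end Duality

section HardyLittlewoodSobolev

theorem rpow_mul_rpow_mul_rpow_le {a b : ℝ} (ha0 : 0 ≤ a) (ha1 : a ≤ 1) (hb0 : 0 ≤ b) (hb1 : b ≤ 1)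
    (s t w : ℝ≥0∞) :
    s ^ a * t ^ b * w ^ (2 - a - b) ≤ s * t + s ^ a * (min s w ^ b * w ^ (2 - a - b)) +
      t ^ b * (min t w ^ a * w ^ (2 - a - b)) := by
  rcases le_or_gt w (min s t) with hw | hw
  · obtain ⟨hws, hwt⟩ := le_min_iff.1 hw
    have hself : ∀ {u : ℝ≥0∞} {c : ℝ}, 0 ≤ c → c ≤ 1 → u ^ c * u ^ (1 - c) = u := fun hc0 hc1 => by
      rw [← rpow_add_of_nonneg _ _ hc0 (sub_nonneg.2 hc1), add_sub_cancel, rpow_one]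
    calc s ^ a * t ^ b * w ^ (2 - a - b)
        = s ^ a * t ^ b * (w ^ (1 - a) * w ^ (1 - b)) := by
          rw [← rpow_add_of_nonneg _ _ (sub_nonneg.2 ha1) (sub_nonneg.2 hb1)]
          ring_nf
      _ ≤ s ^ a * t ^ b * (s ^ (1 - a) * t ^ (1 - b)) := by gcongr
      _ = (s ^ a * s ^ (1 - a)) * (t ^ b * t ^ (1 - b)) := by ring
      _ = s * t := by rw [hself ha0 ha1, hself hb0 hb1]
      _ ≤ _ := by
          rw [add_assoc]
          exact le_self_add
  · rcases le_total t s with hts | hst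
    · have htw : t ≤ min s w := le_min hts (min_eq_right hts ▸ hw).le
      refine le_trans ?_ (le_self_add (a := s * t + _))
      refine le_trans ?_ le_add_self
      rw [mul_assoc]
      gcongr
    · have hsw : s ≤ min t w := le_min hst (min_eq_left hst ▸ hw).le
      refine le_trans ?_ le_add_self
      rw [mul_comm (s ^ a), mul_assoc]
      gcongr

variable {E : Type*} [NormedAddCommGroup E] [NormedSpace ℝ E] [FiniteDimensional ℝ E]
  [Nontrivial E] [MeasurableSpace E] [BorelSpace E] (μ : Measure E) [μ.IsAddHaarMeasure]

theorem exists_lintegral_min_rpow_mul_rpow_le {a b : ℝ} (ha : a < 1) (hb : 0 < b)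
    (hab : 1 < a + b) :
    ∃ C : ℝ≥0∞, C ≠ ⊤ ∧ ∀ (t : ℝ≥0∞) (x : E), t ≠ ⊤ →
      ∫⁻ y, min t (‖x - y‖ₑ ^ (-(finrank ℝ E : ℝ))) ^ b *
        (‖x - y‖ₑ ^ (-(finrank ℝ E : ℝ))) ^ (2 - a - b) ∂μ ≤ t ^ (1 - a) * C := by
  set N := (finrank ℝ E : ℝ)
  have hN : 0 < N := Nat.cast_pos.2 Module.finrank_pos
  obtain ⟨C, hC, hint⟩ := exists_lintegral_enorm_rpow_mul_max_rpow_eq μ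
    (A := -N * (2 - a - b)) (τ := N * b) (.inr (by nlinarith)) (by nlinarith)
  refine ⟨C, hC, fun t x ht => ?_⟩
  rw [lintegral_sub_left_eq_self
    (fun z : E => min t (‖z‖ₑ ^ (-N)) ^ b * (‖z‖ₑ ^ (-N)) ^ (2 - a - b))]
  rcases eq_or_ne t 0 with rfl | ht0
  · simp [hb]
  set ρ := t ^ (-N⁻¹)
  have hρN : ρ ^ (-N) = t := by rw [← rpow_mul, neg_mul_neg, inv_mul_cancel₀ hN.ne', rpow_one]
  have hmin : ∀ z : E, min t (‖z‖ₑ ^ (-N)) ^ b * (‖z‖ₑ ^ (-N)) ^ (2 - a - b) =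
      ‖z‖ₑ ^ (-N * (2 - a - b)) * max ‖z‖ₑ ρ ^ (-(N * b)) := fun z => by
    nth_rw 1 [← hρN]
    rw [max_comm, ← (antitone_rpow_of_nonpos (neg_nonpos.2 hN.le)).map_max, ← rpow_mul, ← rpow_mul,
      mul_comm, neg_mul N b]
  rw [lintegral_congr hmin, hint ρ (by simp [ρ, rpow_eq_zero_iff, ht0, ht])
    (by simp [ρ, rpow_eq_top_iff, ht0, ht]), ← rpow_mul]
  refine (congrArg (t ^ · * C) ?_).le
  field_simp
  ring

theorem exists_lintegral_lintegral_rpow_mul_min_rpow_mul_rpow_le {a b : ℝ} (ha0 : 0 ≤ a)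
    (ha1 : a < 1) (hb : 0 < b) (hab : 1 < a + b) :
    ∃ C : ℝ≥0∞, C ≠ ⊤ ∧ ∀ g : E → ℝ≥0∞, Measurable g → ∫⁻ x, g x ∂μ ≤ 1 →
      ∫⁻ x, ∫⁻ y, g x ^ a * (min (g x) (‖x - y‖ₑ ^ (-(finrank ℝ E : ℝ))) ^ b *
        (‖x - y‖ₑ ^ (-(finrank ℝ E : ℝ))) ^ (2 - a - b)) ∂μ ∂μ ≤ C := by
  obtain ⟨C, hC, hint⟩ := exists_lintegral_min_rpow_mul_rpow_le μ ha1 hb hab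
  refine ⟨C, hC, fun g hg hg1 => ?_⟩
  calc _ ≤ ∫⁻ x, g x * C ∂μ := by
        refine lintegral_mono_ae ?_
        filter_upwards [ae_lt_top hg (hg1.trans_lt one_lt_top).ne] with x hx
        rw [lintegral_const_mul _ (by fun_prop)]
        refine (mul_le_mul_right (hint (g x) x hx.ne) _).trans_eq ?_
        rw [← mul_assoc, ← rpow_add_of_nonneg _ _ ha0 (sub_nonneg.2 ha1.le), add_sub_cancel,
          rpow_one]
    _ ≤ C := by
        rw [lintegral_mul_const _ hg]
        exact mul_le_of_le_one_left zero_le hg1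

theorem exists_lintegral_lintegral_rpow_mul_rpow_mul_enorm_sub_rpow_le {a b : ℝ} (ha0 : 0 < a)
    (ha1 : a < 1) (hb0 : 0 < b) (hb1 : b < 1) (hab : 1 < a + b) :
    ∃ C : ℝ≥0∞, C ≠ ⊤ ∧ ∀ f h : E → ℝ≥0∞, Measurable f → Measurable h →
      ∫⁻ x, f x ∂μ ≤ 1 → ∫⁻ y, h y ∂μ ≤ 1 →
      ∫⁻ y, ∫⁻ x, f x ^ a * h y ^ b * (‖x - y‖ₑ ^ (-(finrank ℝ E : ℝ))) ^ (2 - a - b) ∂μ ∂μ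
        ≤ C := by
  obtain ⟨C₁, hC₁, htrunc₁⟩ :=
    exists_lintegral_lintegral_rpow_mul_min_rpow_mul_rpow_le μ ha0.le ha1 hb0 hab
  obtain ⟨C₂, hC₂, htrunc₂⟩ :=
    exists_lintegral_lintegral_rpow_mul_min_rpow_mul_rpow_le μ hb0.le hb1 ha0 (by linarith)
  refine ⟨1 + C₁ + C₂, by simp [hC₁, hC₂], fun f h hf hh hf1 hh1 => ?_⟩
  let w : E → E → ℝ≥0∞ := fun x y => ‖x - y‖ₑ ^ (-(finrank ℝ E : ℝ))
  let T₁ : E → E → ℝ≥0∞ := fun x y => f x ^ a * (min (f x) (w x y) ^ b * w x y ^ (2 - a - b))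
  let T₂ : E → E → ℝ≥0∞ := fun x y => h y ^ b * (min (h y) (w x y) ^ a * w x y ^ (2 - a - b))
  have hT₁ : ∫⁻ y, ∫⁻ x, T₁ x y ∂μ ∂μ ≤ C₁ := by
    rw [lintegral_lintegral_swap (by fun_prop)]
    exact htrunc₁ f hf hf1
  have hT₂ : ∫⁻ y, ∫⁻ x, T₂ x y ∂μ ∂μ ≤ C₂ := by
    refine le_of_eq_of_le ?_ (htrunc₂ h hh hh1)
    simp only [T₂, w, enorm_sub_rev, sub_right_comm]
  have hprod : ∫⁻ y, ∫⁻ x, f x * h y ∂μ ∂μ ≤ 1 := by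
    simp only [lintegral_mul_const _ hf]
    rw [lintegral_const_mul _ hh]
    exact mul_le_one' hf1 hh1
  calc _ ≤ ∫⁻ y, ∫⁻ x, (f x * h y + T₁ x y + T₂ x y) ∂μ ∂μ := by
        gcongr with y x
        exact rpow_mul_rpow_mul_rpow_le ha0.le ha1.le hb0.le hb1.le _ _ _
    _ = ∫⁻ y, ∫⁻ x, f x * h y ∂μ ∂μ + ∫⁻ y, ∫⁻ x, T₁ x y ∂μ ∂μ + ∫⁻ y, ∫⁻ x, T₂ x y ∂μ ∂μ := by
        have hinner : ∀ y, ∫⁻ x, (f x * h y + T₁ x y + T₂ x y) ∂μ =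
            ∫⁻ x, f x * h y ∂μ + ∫⁻ x, T₁ x y ∂μ + ∫⁻ x, T₂ x y ∂μ := fun y => by
          rw [lintegral_add_left (by fun_prop), lintegral_add_left (by fun_prop)]
        rw [lintegral_congr hinner, lintegral_add_left (by fun_prop),
          lintegral_add_left (by fun_prop)]
    _ ≤ 1 + C₁ + C₂ := by gcongr

theorem isStrongType_enorm_sub_rpow {p q : ℝ} (hp : 1 < p) (hpq : p < q) :
    IsStrongType μ μ p q
      fun x y : E => ‖x - y‖ₑ ^ (-(finrank ℝ E * (1 - 1 / p + 1 / q))) := by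
  have hqs : q.HolderConjugate q.conjExponent := .conjExponent (hp.trans hpq)
  set s := q.conjExponent
  have hp0 : 0 < p := by linarith
  have hs0 : 0 < s := hqs.symm.pos
  have hs : 1 / s = 1 - 1 / q := by
    simp only [one_div]
    linarith [hqs.inv_add_inv_eq_one]
  obtain ⟨C, hC, hbound⟩ := exists_lintegral_lintegral_rpow_mul_rpow_mul_enorm_sub_rpow_le μ
    (a := 1 / p) (b := 1 / s) (by positivity) ((div_lt_one hp0).2 hp) (by positivity)
    ((div_lt_one hs0).2 hqs.symm.lt) (by linarith [one_div_lt_one_div_of_lt hp0 hpq])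
  refine isStrongType_of_bilinear_le hp0 hqs hC fun f h hf hh hf1 hh1 => ?_
  refine le_of_eq_of_le (lintegral_congr fun y => ?_)
    (hbound _ _ (hf.pow_const p) (hh.pow_const s) hf1 hh1)
  rw [← lintegral_mul_const _ (by fun_prop)]
  refine lintegral_congr fun x => ?_
  have hfx : (f x ^ p) ^ (1 / p) = f x := by rw [one_div, rpow_rpow_inv hp0.ne']
  have hhy : (h y ^ s) ^ (1 / s) = h y := by rw [one_div, rpow_rpow_inv hs0.ne']
  rw [hfx, hhy, ← rpow_mul, hs, mul_right_comm]
  ring_nf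

end HardyLittlewoodSobolev

section LocalRieszKernel

variable {E : Type*} [NormedAddCommGroup E] [NormedSpace ℝ E]

/-- The Riesz kernel `|z| ^ (γ - dim E)` cut off at the scale `t`: beyond `t` it decays like
`|z| ^ (-γ - dim E)`. It is normalised so that its integral does not depend on `t`. -/
def localRieszKernel (γ : ℝ) (t : ℝ≥0∞) (z : E) : ℝ≥0∞ :=
  t ^ γ * (‖z‖ₑ ^ (γ - finrank ℝ E) * max ‖z‖ₑ t ^ (-(2 * γ)))

theorem localRieszKernel_of_enorm_le (γ : ℝ) {t : ℝ≥0∞} (ht0 : t ≠ 0) (ht : t ≠ ⊤) {z : E}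
    (hz : ‖z‖ₑ ≤ t) : localRieszKernel γ t z = t ^ (-γ) * ‖z‖ₑ ^ (γ - finrank ℝ E) := by
  rw [localRieszKernel, max_eq_right hz, show -γ = γ + -(2 * γ) by ring, rpow_add _ _ ht0 ht]
  ring

variable [FiniteDimensional ℝ E] [MeasurableSpace E] [BorelSpace E] (μ : Measure E)
  [μ.IsAddHaarMeasure]

theorem exists_lintegral_localRieszKernel_eq {γ : ℝ} (hγ : 0 < γ) :
    ∃ C : ℝ≥0∞, C ≠ ⊤ ∧ ∀ t : ℝ≥0∞, t ≠ 0 → t ≠ ⊤ →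
      ∫⁻ z : E, localRieszKernel γ t z ∂μ = C := by
  obtain ⟨C, hC, hint⟩ := exists_lintegral_enorm_rpow_mul_max_rpow_eq μ
    (A := γ - finrank ℝ E) (τ := 2 * γ) (.inr (by linarith)) (by linarith)
  refine ⟨C, hC, fun t ht0 ht => ?_⟩
  simp only [localRieszKernel]
  rw [lintegral_const_mul _ (by fun_prop), hint t ht0 ht, ← mul_assoc, ← rpow_add _ _ ht0 ht,
    show γ + (γ - finrank ℝ E + finrank ℝ E - 2 * γ) = 0 by ring, rpow_zero, one_mul]

theorem isStrongType_min_localRieszKernel {p γ : ℝ} (hp : 1 ≤ p) (hγ : 0 < γ) {t : E → ℝ≥0∞}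
    (htm : Measurable t) (ht : ∀ᵐ x ∂μ, t x ≠ 0 ∧ t x ≠ ⊤) :
    IsStrongType μ μ p p fun x y =>
      min (localRieszKernel γ (t y) (x - y)) (localRieszKernel γ (t x) (x - y)) := by
  obtain ⟨C, hC, hint⟩ := exists_lintegral_localRieszKernel_eq μ hγ
  refine isStrongType_min hp (by unfold localRieszKernel Function.uncurry; fun_prop)
    (by unfold localRieszKernel Function.uncurry; fun_prop) hC hC ?_ ?_
  · filter_upwards [ht] with y hy
    rw [lintegral_sub_right_eq_self, hint _ hy.1 hy.2]
  · filter_upwards [ht] with x hx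
    rw [lintegral_sub_left_eq_self (localRieszKernel γ (t x)), hint _ hx.1 hx.2]

end LocalRieszKernel

section SteinWeiss

theorem mul_mul_rpow_mul_mul_mul_rpow {a b c : ℝ≥0∞} (ha0 : a ≠ 0) (ha : a ≠ ⊤) (hb0 : b ≠ 0)
    (hb : b ≠ ⊤) (hc0 : c ≠ 0) (hc : c ≠ ⊤) {P Q : ℝ} (hP : 0 ≤ P) (hQ : 0 ≤ Q)
    (s₁ s₂ s₃ t₁ t₂ t₃ : ℝ) :
    (a ^ s₁ * b ^ s₂ * c ^ s₃) ^ P * (a ^ t₁ * b ^ t₂ * c ^ t₃) ^ Q =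
      a ^ (s₁ * P + t₁ * Q) * b ^ (s₂ * P + t₂ * Q) * c ^ (s₃ * P + t₃ * Q) := by
  simp only [mul_rpow_of_nonneg _ _ hP, mul_rpow_of_nonneg _ _ hQ, ← rpow_mul,
    rpow_add _ _ ha0 ha, rpow_add _ _ hb0 hb, rpow_add _ _ hc0 hc]
  ring

theorem ae_snd_ne_zero {X F : Type*} [MeasurableSpace X] [MeasurableSpace F] [Zero F]
    (μ : Measure X) (ν : Measure F) [NullSingletonClass ν] : ∀ᵐ Z ∂(μ.prod ν), Z.2 ≠ 0 :=
  Measure.quasiMeasurePreserving_snd.ae (Measure.ae_ne ν 0)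

variable {E F : Type*} [NormedAddCommGroup E] [NormedAddCommGroup F]

/-- The quantity `max (|x - y|, |x̂|, |ŷ|)` for `X = (x, x̂)` and `Y = (y, ŷ)`. It is comparable to
`|X - Y|` as long as `|x̂| ≤ 2 |X - Y|`, and unlike `|X - Y|` it is bounded below by the weights. -/
def farDist (X Y : E × F) : ℝ≥0∞ :=
  max ‖X.1 - Y.1‖ₑ (max ‖X.2‖ₑ ‖Y.2‖ₑ)

theorem farDist_comm (X Y : E × F) : farDist X Y = farDist Y X := by
  rw [farDist, farDist, enorm_sub_rev, max_comm ‖X.2‖ₑ]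

theorem farDist_ne_top (X Y : E × F) : farDist X Y ≠ ⊤ := by simp [farDist]

theorem farDist_ne_zero {X : E × F} (hX : X.2 ≠ 0) (Y : E × F) : farDist X Y ≠ 0 :=
  (lt_max_of_lt_right (lt_max_of_lt_left (enorm_pos.2 hX))).ne'

theorem farDist_rpow_neg_le {X : E × F} (hX : X.2 ≠ 0) (Y : E × F) {a b : ℝ} (ha : 0 ≤ a)
    (hb : 0 ≤ b) : farDist X Y ^ (-(a + b)) ≤
      max ‖X.1 - Y.1‖ₑ ‖X.2‖ₑ ^ (-a) * max ‖Y.2‖ₑ ‖X.2‖ₑ ^ (-b) := by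
  rw [neg_add, rpow_add _ _ (farDist_ne_zero hX Y) (farDist_ne_top X Y)]
  refine mul_le_mul' (antitone_rpow_of_nonpos (neg_nonpos.2 ha) ?_)
    (antitone_rpow_of_nonpos (neg_nonpos.2 hb) ?_)
  · exact max_le_max le_rfl (le_max_left _ _)
  · rw [max_comm]
    exact le_max_right _ _

theorem enorm_snd_sub_snd_le (X Y : E × F) : ‖X.2 - Y.2‖ₑ ≤ ‖X - Y‖ₑ :=
  enorm_le_iff_norm_le.2 (norm_snd_le (X - Y))

theorem enorm_fst_sub_fst_le (X Y : E × F) : ‖X.1 - Y.1‖ₑ ≤ ‖X - Y‖ₑ :=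
  enorm_le_iff_norm_le.2 (norm_fst_le (X - Y))

theorem enorm_le_add_enorm_sub (x y : F) : ‖y‖ₑ ≤ ‖x‖ₑ + ‖x - y‖ₑ :=
  (congrArg enorm (sub_sub_cancel x y)).ge.trans enorm_sub_le

theorem farDist_le_three_mul_enorm_sub {X Y : E × F} (h : ‖X.2‖ₑ ≤ 2 * ‖X - Y‖ₑ) :
    farDist X Y ≤ 3 * ‖X - Y‖ₑ := by
  have hY : ‖Y.2‖ₑ ≤ 3 * ‖X - Y‖ₑ :=
    calc ‖Y.2‖ₑ ≤ ‖X.2‖ₑ + ‖X.2 - Y.2‖ₑ := enorm_le_add_enorm_sub _ _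
      _ ≤ 2 * ‖X - Y‖ₑ + ‖X - Y‖ₑ := add_le_add h (enorm_snd_sub_snd_le X Y)
      _ = 3 * ‖X - Y‖ₑ := by ring
  refine max_le ((enorm_fst_sub_fst_le X Y).trans ?_) (max_le (h.trans ?_) hY)
  · exact le_mul_of_one_le_left' (by norm_num)
  · gcongr
    norm_num

theorem enorm_sub_rpow_neg_le_of_far {X Y : E × F} {lam : ℝ} (hlam : 0 ≤ lam)
    (h : ‖X.2‖ₑ ≤ 2 * ‖X - Y‖ₑ) : ‖X - Y‖ₑ ^ (-lam) ≤ 3 ^ lam * farDist X Y ^ (-lam) := by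
  calc ‖X - Y‖ₑ ^ (-lam) = 3 ^ lam * (3 * ‖X - Y‖ₑ) ^ (-lam) := by
        rw [mul_rpow_of_ne_top (by simp) enorm_ne_top, ← mul_assoc,
          ← rpow_add _ _ (by simp) (by simp), add_neg_cancel, rpow_zero, one_mul]
    _ ≤ 3 ^ lam * farDist X Y ^ (-lam) := mul_le_mul_right
        (antitone_rpow_of_nonpos (neg_nonpos.2 hlam) (farDist_le_three_mul_enorm_sub h)) _

theorem enorm_sub_le_enorm_snd_right_of_near {X Y : E × F} (h : 2 * ‖X - Y‖ₑ ≤ ‖X.2‖ₑ) :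
    ‖X - Y‖ₑ ≤ ‖Y.2‖ₑ := by
  refine (ENNReal.add_le_add_iff_right (enorm_ne_top (x := X - Y))).1 ?_
  calc ‖X - Y‖ₑ + ‖X - Y‖ₑ = 2 * ‖X - Y‖ₑ := (two_mul _).symm
    _ ≤ ‖X.2‖ₑ := h
    _ ≤ ‖Y.2‖ₑ + ‖Y.2 - X.2‖ₑ := enorm_le_add_enorm_sub _ _
    _ ≤ ‖Y.2‖ₑ + ‖X - Y‖ₑ := by
        rw [enorm_sub_rev]
        exact add_le_add_right (enorm_snd_sub_snd_le X Y) _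

theorem enorm_snd_left_le_two_mul_of_near {X Y : E × F} (h : 2 * ‖X - Y‖ₑ ≤ ‖X.2‖ₑ) :
    ‖X.2‖ₑ ≤ 2 * ‖Y.2‖ₑ :=
  calc ‖X.2‖ₑ ≤ ‖Y.2‖ₑ + ‖X.2 - Y.2‖ₑ := enorm_sub_rev X.2 Y.2 ▸ enorm_le_add_enorm_sub _ _
    _ ≤ ‖Y.2‖ₑ + ‖Y.2‖ₑ := add_le_add_right
        ((enorm_snd_sub_snd_le X Y).trans (enorm_sub_le_enorm_snd_right_of_near h)) _
    _ = 2 * ‖Y.2‖ₑ := (two_mul _).symm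

theorem enorm_sub_le_enorm_snd_left_of_near {X Y : E × F} (h : 2 * ‖X - Y‖ₑ ≤ ‖X.2‖ₑ) :
    ‖X - Y‖ₑ ≤ ‖X.2‖ₑ :=
  (le_mul_of_one_le_left' one_le_two).trans h

theorem enorm_snd_right_le_two_mul_of_near {X Y : E × F} (h : 2 * ‖X - Y‖ₑ ≤ ‖X.2‖ₑ) :
    ‖Y.2‖ₑ ≤ 2 * ‖X.2‖ₑ :=
  calc ‖Y.2‖ₑ ≤ ‖X.2‖ₑ + ‖X.2 - Y.2‖ₑ := enorm_le_add_enorm_sub _ _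
    _ ≤ ‖X.2‖ₑ + ‖X.2‖ₑ := add_le_add_right
        ((enorm_snd_sub_snd_le X Y).trans (enorm_sub_le_enorm_snd_left_of_near h)) _
    _ = 2 * ‖X.2‖ₑ := (two_mul _).symm

theorem rpow_neg_mul_enorm_sub_rpow_neg_le_of_near {X Y : E × F} {γ lam : ℝ} (hγ : 0 ≤ γ)
    (hlam : 0 ≤ lam) (h : 2 * ‖X - Y‖ₑ ≤ ‖X.2‖ₑ) :
    ‖X.2‖ₑ ^ (-γ) * ‖X - Y‖ₑ ^ (-lam) ≤ ‖X - Y‖ₑ ^ (-(γ + lam)) :=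
  calc ‖X.2‖ₑ ^ (-γ) * ‖X - Y‖ₑ ^ (-lam) ≤ ‖X - Y‖ₑ ^ (-γ) * ‖X - Y‖ₑ ^ (-lam) :=
        mul_le_mul_left (antitone_rpow_of_nonpos (neg_nonpos.2 hγ)
          (enorm_sub_le_enorm_snd_left_of_near h)) _
    _ = ‖X - Y‖ₑ ^ (-(γ + lam)) := by
        simp only [rpow_neg, ← inv_rpow]
        exact (rpow_add_of_nonneg _ _ hγ hlam).symm

theorem rpow_neg_mul_enorm_sub_rpow_le_min_localRieszKernel_of_near [NormedSpace ℝ E]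
    [NormedSpace ℝ F] {X Y : E × F} (γ : ℝ) (hX : X.2 ≠ 0) (hY : Y.2 ≠ 0)
    (h : 2 * ‖X - Y‖ₑ ≤ ‖X.2‖ₑ) :
    ‖X.2‖ₑ ^ (-γ) * ‖X - Y‖ₑ ^ (γ - finrank ℝ (E × F)) ≤ 2 ^ |γ| *
      min (localRieszKernel γ ‖Y.2‖ₑ (X - Y)) (localRieszKernel γ ‖X.2‖ₑ (X - Y)) := by
  rw [localRieszKernel_of_enorm_le γ (enorm_ne_zero.2 hY) enorm_ne_top
      (enorm_sub_le_enorm_snd_right_of_near h),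
    localRieszKernel_of_enorm_le γ (enorm_ne_zero.2 hX) enorm_ne_top
      (enorm_sub_le_enorm_snd_left_of_near h), mul_min]
  refine le_min ?_ (le_mul_of_one_le_left'
    ((one_rpow |γ|).ge.trans (rpow_le_rpow one_le_two (abs_nonneg γ))))
  rw [← mul_assoc, ← abs_neg]
  exact mul_le_mul_left (rpow_le_two_rpow_abs_mul_rpow (enorm_snd_right_le_two_mul_of_near h)
    (enorm_snd_left_le_two_mul_of_near h) _) _

variable [NormedSpace ℝ E] [NormedSpace ℝ F] [FiniteDimensional ℝ E] [FiniteDimensional ℝ F]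
  [MeasurableSpace E] [MeasurableSpace F] [BorelSpace E] [BorelSpace F]
  (μ : Measure E) (ν : Measure F) [μ.IsAddHaarMeasure] [ν.IsAddHaarMeasure]

theorem measurable_farDist : Measurable (Function.uncurry (farDist : E × F → E × F → ℝ≥0∞)) := by
  unfold farDist Function.uncurry
  fun_prop

theorem exists_lintegral_farDist_rpow_le {δ ε : ℝ} (hδ : 0 < δ) (hε : 0 < ε) :
    ∃ C : ℝ≥0∞, C ≠ ⊤ ∧ ∀ X : E × F, X.2 ≠ 0 →
      ∫⁻ Y, ‖X.2‖ₑ ^ δ * ‖Y.2‖ₑ ^ (-finrank ℝ F + ε) * farDist X Y ^ (-(finrank ℝ E + δ + ε))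
        ∂(μ.prod ν) ≤ C := by
  set n := (finrank ℝ E : ℝ)
  set m := (finrank ℝ F : ℝ)
  have hn : 0 ≤ n := Nat.cast_nonneg _
  obtain ⟨C₁, hC₁, hint₁⟩ := exists_lintegral_enorm_rpow_mul_max_rpow_eq μ
    (A := 0) (τ := n + δ / 2) (.inl le_rfl) (by linarith)
  obtain ⟨C₂, hC₂, hint₂⟩ := exists_lintegral_enorm_rpow_mul_max_rpow_eq ν
    (A := -m + ε) (τ := δ / 2 + ε) (.inr (by linarith)) (by linarith)
  refine ⟨C₁ * C₂, mul_ne_top hC₁ hC₂, fun X hX => ?_⟩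
  set r := ‖X.2‖ₑ
  have hr0 : r ≠ 0 := enorm_ne_zero.2 hX
  have hr : r ≠ ⊤ := enorm_ne_top
  have hsplit : ∀ Y : E × F, r ^ δ * ‖Y.2‖ₑ ^ (-m + ε) * farDist X Y ^ (-(n + δ + ε)) ≤
      r ^ δ * (max ‖X.1 - Y.1‖ₑ r ^ (-(n + δ / 2)) *
        (‖Y.2‖ₑ ^ (-m + ε) * max ‖Y.2‖ₑ r ^ (-(δ / 2 + ε)))) := fun Y => by
    rw [show n + δ + ε = n + δ / 2 + (δ / 2 + ε) by ring, mul_assoc, mul_left_comm (max _ _ ^ _)]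
    gcongr
    exact farDist_rpow_neg_le hX Y (by linarith) (by linarith)
  have hfst : ∫⁻ y, max ‖X.1 - y‖ₑ r ^ (-(n + δ / 2)) ∂μ = r ^ (-(δ / 2)) * C₁ := by
    rw [lintegral_sub_left_eq_self (fun z : E => max ‖z‖ₑ r ^ (-(n + δ / 2))),
      show -(δ / 2) = 0 + n - (n + δ / 2) by ring, ← hint₁ r hr0 hr]
    simp only [rpow_zero, one_mul]
  have hsnd : ∫⁻ y, ‖y‖ₑ ^ (-m + ε) * max ‖y‖ₑ r ^ (-(δ / 2 + ε)) ∂ν = r ^ (-(δ / 2)) * C₂ := by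
    rw [show -(δ / 2) = -m + ε + m - (δ / 2 + ε) by ring, hint₂ r hr0 hr]
  calc _ ≤ _ := lintegral_mono hsplit
    _ = r ^ δ * (r ^ (-(δ / 2)) * C₁ * (r ^ (-(δ / 2)) * C₂)) := by
        rw [lintegral_const_mul _ (by fun_prop),
          lintegral_prod_mul (f := fun y => max ‖X.1 - y‖ₑ r ^ (-(n + δ / 2)))
            (g := fun y => ‖y‖ₑ ^ (-m + ε) * max ‖y‖ₑ r ^ (-(δ / 2 + ε)))
            (by fun_prop) (by fun_prop), hfst, hsnd]
    _ = r ^ (δ + -(δ / 2) + -(δ / 2)) * (C₁ * C₂) := by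
        rw [rpow_add _ _ hr0 hr, rpow_add _ _ hr0 hr]
        ring
    _ = C₁ * C₂ := by rw [show δ + -(δ / 2) + -(δ / 2) = 0 by ring, rpow_zero, one_mul]

theorem isStrongType_farDist_rpow [Nontrivial F] {lam p q α β : ℝ} (hp : 1 < p) (hpq : p ≤ q)
    (hα : α < finrank ℝ F * (1 - 1 / p)) (hβ : β < finrank ℝ F / q)
    (hbal : α + β + lam = (finrank ℝ E + finrank ℝ F) * (1 - 1 / p + 1 / q)) :
    IsStrongType (μ.prod ν) (μ.prod ν) p q
      fun X Y : E × F => ‖X.2‖ₑ ^ (-α) * ‖Y.2‖ₑ ^ (-β) * farDist X Y ^ (-lam) := by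
  set n := (finrank ℝ E : ℝ)
  set m := (finrank ℝ F : ℝ)
  have hq : 0 < q := by linarith
  have hP : 0 < 1 - 1 / p := sub_pos.2 ((div_lt_one (by linarith)).2 hp)
  have hQ : 0 < 1 / q := by positivity
  rw [div_eq_mul_one_div] at hβ
  set P := 1 - 1 / p
  set Q := 1 / q
  obtain ⟨ε, hε, hεα⟩ : ∃ ε, 0 < ε ∧ ε * (P + Q) = m * P - α :=
    ⟨(m * P - α) / (P + Q), div_pos (by linarith) (by linarith), div_mul_cancel₀ _ (by linarith)⟩
  obtain ⟨δ, hδ, hδβ⟩ : ∃ δ, 0 < δ ∧ δ * (P + Q) = m * Q - β :=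
    ⟨(m * Q - β) / (P + Q), div_pos (by linarith) (by linarith), div_mul_cancel₀ _ (by linarith)⟩
  obtain ⟨C₁, hC₁, hint₁⟩ := exists_lintegral_farDist_rpow_le μ ν hδ hε
  obtain ⟨C₂, hC₂, hint₂⟩ := exists_lintegral_farDist_rpow_le μ ν hε hδ
  have hmeas := measurable_farDist (E := E) (F := F)
  have hne := ae_snd_ne_zero μ ν
  refine (isStrongType_rpow_mul_rpow hp.le hpq
    (K₁ := fun X Y => ‖X.2‖ₑ ^ (-m + ε) * ‖Y.2‖ₑ ^ δ * farDist X Y ^ (-(n + δ + ε)))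
    (K₂ := fun X Y => ‖X.2‖ₑ ^ ε * ‖Y.2‖ₑ ^ (-m + δ) * farDist X Y ^ (-(n + ε + δ)))
    (.mul (by fun_prop) (hmeas.pow_const _)) (.mul (by fun_prop) (hmeas.pow_const _))
    hC₁ hC₂ ?_ (hne.mono hint₂)).mono hq.le ?_
  · filter_upwards [hne] with Y hY
    refine le_of_eq_of_le (lintegral_congr fun X => ?_) (hint₁ Y hY)
    rw [farDist_comm, mul_comm (‖X.2‖ₑ ^ _)]
  · filter_upwards [hne] with Y hY
    filter_upwards [hne] with X hX
    rw [mul_mul_rpow_mul_mul_mul_rpow (enorm_ne_zero.2 hX) enorm_ne_top (enorm_ne_zero.2 hY)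
        enorm_ne_top (farDist_ne_zero hX Y) (farDist_ne_top X Y) hP.le hQ.le,
      show (-m + ε) * P + ε * Q = -α by linarith, show δ * P + (-m + δ) * Q = -β by linarith,
      show -(n + δ + ε) * P + -(n + ε + δ) * Q = -lam by linarith]

theorem isStrongType_enorm_snd_rpow_mul_enorm_sub_rpow_of_near [Nontrivial F]
    {lam p q α β : ℝ} (hlam : 0 ≤ lam) (hp : 1 < p) (hpq : p ≤ q)
    (hα : α < finrank ℝ F * (1 - 1 / p)) (hβ : β < finrank ℝ F / q)
    (hbal : α + β + lam = (finrank ℝ E + finrank ℝ F) * (1 - 1 / p + 1 / q))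
    {K : E × F → E × F → ℝ≥0∞} (hKm : Measurable (Function.uncurry K))
    (hK : IsStrongType (μ.prod ν) (μ.prod ν) p q K)
    (hnear : ∀ X Y : E × F, X.2 ≠ 0 → Y.2 ≠ 0 → 2 * ‖X - Y‖ₑ ≤ ‖X.2‖ₑ →
      ‖X.2‖ₑ ^ (-(α + β)) * ‖X - Y‖ₑ ^ (-lam) ≤ K X Y) :
    IsStrongType (μ.prod ν) (μ.prod ν) p q
      fun X Y : E × F => ‖X.2‖ₑ ^ (-α) * ‖Y.2‖ₑ ^ (-β) * ‖X - Y‖ₑ ^ (-lam) := by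
  have hq : 1 ≤ q := by linarith
  have hmeas := measurable_farDist (E := E) (F := F)
  have hc₁ : (3 : ℝ≥0∞) ^ lam ≠ ⊤ := rpow_ne_top_of_nonneg hlam (by simp)
  have hc₂ : (2 : ℝ≥0∞) ^ |β| ≠ ⊤ := rpow_ne_top_of_nonneg (abs_nonneg β) (by simp)
  refine (((isStrongType_farDist_rpow μ ν hp hpq hα hβ hbal).const_mul (by linarith) hc₁).add hq
    (.const_mul (.mul (by fun_prop) (hmeas.pow_const _)) _) (hKm.const_mul _)
    (hK.const_mul (by linarith) hc₂)).mono (by linarith) ?_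
  filter_upwards [ae_snd_ne_zero μ ν] with Y hY
  filter_upwards [ae_snd_ne_zero μ ν] with X hX
  rcases le_total ‖X.2‖ₑ (2 * ‖X - Y‖ₑ) with hXY | hXY
  · refine le_add_right ?_
    rw [mul_left_comm]
    exact mul_le_mul_right (enorm_sub_rpow_neg_le_of_far hlam hXY) _
  · refine le_add_left ?_
    calc ‖X.2‖ₑ ^ (-α) * ‖Y.2‖ₑ ^ (-β) * ‖X - Y‖ₑ ^ (-lam)
        ≤ ‖X.2‖ₑ ^ (-α) * (2 ^ |β| * ‖X.2‖ₑ ^ (-β)) * ‖X - Y‖ₑ ^ (-lam) := by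
          gcongr
          rw [← abs_neg β]
          exact rpow_le_two_rpow_abs_mul_rpow (enorm_snd_left_le_two_mul_of_near hXY)
            (enorm_snd_right_le_two_mul_of_near hXY) _
      _ = 2 ^ |β| * (‖X.2‖ₑ ^ (-(α + β)) * ‖X - Y‖ₑ ^ (-lam)) := by
          rw [neg_add, rpow_add _ _ (enorm_ne_zero.2 hX) enorm_ne_top]
          ring
      _ ≤ 2 ^ |β| * K X Y := mul_le_mul_right (hnear X Y hX hY hXY) _

theorem isStrongType_enorm_snd_rpow_mul_enorm_sub_rpow [Nontrivial F] {lam p q α β : ℝ}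
    (hlam0 : 0 ≤ lam) (hlam1 : lam < finrank ℝ E + finrank ℝ F) (hp : 1 < p) (hpq : p ≤ q)
    (hα : α < finrank ℝ F * (1 - 1 / p)) (hβ : β < finrank ℝ F / q) (hαβ : 0 ≤ α + β)
    (hbal : α + β + lam = (finrank ℝ E + finrank ℝ F) * (1 - 1 / p + 1 / q)) :
    IsStrongType (μ.prod ν) (μ.prod ν) p q
      fun X Y : E × F => ‖X.2‖ₑ ^ (-α) * ‖Y.2‖ₑ ^ (-β) * ‖X - Y‖ₑ ^ (-lam) := by
  have hN : (finrank ℝ (E × F) : ℝ) = finrank ℝ E + finrank ℝ F := by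
    rw [Module.finrank_prod, Nat.cast_add]
  rcases hpq.lt_or_eq with hlt | rfl
  · refine isStrongType_enorm_snd_rpow_mul_enorm_sub_rpow_of_near μ ν hlam0 hp hpq hα hβ hbal
      (by fun_prop) (isStrongType_enorm_sub_rpow (μ.prod ν) hp hlt) fun X Y _ _ hXY => ?_
    rw [hN, ← hbal]
    exact rpow_neg_mul_enorm_sub_rpow_neg_le_of_near hαβ hlam0 hXY
  · have hbal' : α + β + lam = finrank ℝ (E × F) := by rw [hN, hbal]; ring
    refine isStrongType_enorm_snd_rpow_mul_enorm_sub_rpow_of_near μ ν hlam0 hp le_rfl hα hβ hbal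
      (K := fun X Y => 2 ^ |α + β| * min (localRieszKernel (α + β) ‖Y.2‖ₑ (X - Y))
        (localRieszKernel (α + β) ‖X.2‖ₑ (X - Y)))
      (by unfold localRieszKernel Function.uncurry; fun_prop)
      ((isStrongType_min_localRieszKernel (μ.prod ν) hp.le (by linarith [hbal'])
        (t := fun X => ‖X.2‖ₑ) (by fun_prop) ?_).const_mul (by linarith)
          (rpow_ne_top_of_nonneg (abs_nonneg _) (by simp))) fun X Y hX hY hXY => ?_
    · filter_upwards [ae_snd_ne_zero μ ν] with X hX
      exact ⟨enorm_ne_zero.2 hX, enorm_ne_top⟩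
    · rw [show -lam = α + β - finrank ℝ (E × F) by linarith [hbal']]
      exact rpow_neg_mul_enorm_sub_rpow_le_min_localRieszKernel_of_near _ hX hY hXY

theorem steinWeiss_Rnm_dual_general {lam p q α β : ℝ}
    (hlam : lam < (finrank ℝ E : ℝ) + finrank ℝ F) (hp : 1 < p) (hpq : p ≤ q)
    (hα : α < finrank ℝ F * (1 - 1 / p)) (hβ : β < finrank ℝ F / q) (hαβ : 0 ≤ α + β)
    (hbal : 1 / q = 1 / p -
      ((finrank ℝ E : ℝ) + finrank ℝ F - (α + β + lam)) / ((finrank ℝ E : ℝ) + finrank ℝ F)) :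
    ∃ C : ℝ, 0 < C ∧ ∀ f : E × F → ℝ≥0∞, Measurable f →
      (∫⁻ Y, ‖Y.2‖ₑ ^ (-(β * q)) * (∫⁻ X, f X * ‖X - Y‖ₑ ^ (-lam) ∂(μ.prod ν)) ^ q
          ∂(μ.prod ν)) ^ (1 / q) ≤
        ENNReal.ofReal C * (∫⁻ X, ‖X.2‖ₑ ^ (α * p) * f X ^ p ∂(μ.prod ν)) ^ (1 / p) := by
  set n := (finrank ℝ E : ℝ)
  set m := (finrank ℝ F : ℝ)
  have hp0 : 0 < p := by linarith
  have hq0 : 0 < q := by linarith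
  have hn : 0 ≤ n := Nat.cast_nonneg _
  have hPQ : 0 < 1 - 1 / p + 1 / q :=
    add_pos (sub_pos.2 ((div_lt_one hp0).2 hp)) (by positivity)
  rw [div_eq_mul_one_div] at hβ
  have hm : 0 < m := pos_of_mul_pos_left (b := 1 - 1 / p + 1 / q) (by linarith) hPQ.le
  have hF : Nontrivial F := Module.nontrivial_of_finrank_pos (R := ℝ) (Nat.cast_pos.1 hm)
  have hbal' : α + β + lam = (n + m) * (1 - 1 / p + 1 / q) := by
    rw [hbal]
    field_simp
    ring
  have hlam0 : 0 ≤ lam := by nlinarith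
  have hne : ∀ᵐ X ∂(μ.prod ν), ‖X.2‖ₑ ≠ 0 ∧ ‖X.2‖ₑ ≠ ⊤ :=
    (ae_snd_ne_zero μ ν).mono fun X hX => ⟨enorm_ne_zero.2 hX, enorm_ne_top⟩
  rw [mul_one_div] at hβ
  exact IsStrongType.exists_ofReal_weighted hp0.le hq0 (by fun_prop) hne hne
    (isStrongType_enorm_snd_rpow_mul_enorm_sub_rpow μ ν hlam0 hlam hp hpq hα hβ hαβ hbal')

end SteinWeiss

section Euclidean

variable {n m : ℕ}

theorem norm_sub_le_pDist (X Y : EuclideanSpace ℝ (Fin n) × EuclideanSpace ℝ (Fin m)) :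
    ‖X - Y‖ ≤ pDist X Y :=
  max_le (Real.le_sqrt_of_sq_le (le_add_of_nonneg_right (sq_nonneg _)))
    (Real.le_sqrt_of_sq_le (le_add_of_nonneg_left (sq_nonneg _)))

theorem Ilam_le_lintegral_mul_enorm_sub_rpow {lam : ℝ} (hlam : 0 ≤ lam)
    (f : EuclideanSpace ℝ (Fin n) × EuclideanSpace ℝ (Fin m) → ℝ)
    (Y : EuclideanSpace ℝ (Fin n) × EuclideanSpace ℝ (Fin m)) :
    Ilam n m lam f Y ≤ ∫⁻ X, ENNReal.ofReal (f X) * ‖X - Y‖ₑ ^ (-lam) := by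
  refine lintegral_mono fun X => mul_le_mul_right
    (antitone_rpow_of_nonpos (neg_nonpos.2 hlam) ?_) _
  rw [← ofReal_norm]
  exact ofReal_le_ofReal (norm_sub_le_pDist X Y)

end Euclidean

/-- Dual form of the Stein–Weiss type inequality on `ℝ^{n+m}`. -/
theorem steinWeiss_Rnm_dual
    (n m : ℕ) (hm : 1 ≤ m) (lam p q α β : ℝ)
    (hlam0 : 0 < lam) (hlam1 : lam < (n : ℝ) + m)
    (hp1 : 1 < p) (hpq : p ≤ q)
    (hα : α < m * (1 - 1 / p)) (hβ : β < m / q) (hαβ : 0 ≤ α + β)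
    (hbal : 1 / q = 1 / p - ((n : ℝ) + m - (α + β + lam)) / ((n : ℝ) + m)) :
    ∃ C : ℝ, 0 < C ∧
      ∀ f : EuclideanSpace ℝ (Fin n) × EuclideanSpace ℝ (Fin m) → ℝ,
        Measurable f → (∀ X, 0 ≤ f X) →
        (∫⁻ Y, ENNReal.ofReal ‖Y.2‖ ^ (-(β * q)) * Ilam n m lam f Y ^ q) ^ (1 / q)
          ≤ ENNReal.ofReal C *
            (∫⁻ X, ENNReal.ofReal ‖X.2‖ ^ (α * p) * ENNReal.ofReal (f X) ^ p) ^ (1 / p) := by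
  obtain ⟨C, hC, hbound⟩ := steinWeiss_Rnm_dual_general
    (volume : Measure (EuclideanSpace ℝ (Fin n))) (volume : Measure (EuclideanSpace ℝ (Fin m)))
    (by simpa using hlam1) hp1 hpq (by simpa using hα) (by simpa using hβ) hαβ (by simpa using hbal)
  refine ⟨C, hC, fun f hf _ => ?_⟩
  have hq : 0 ≤ q := by linarith
  simp only [ofReal_norm]
  refine (rpow_le_rpow (lintegral_mono fun Y => ?_) (by positivity)).trans
    (hbound (fun X => ENNReal.ofReal (f X)) hf.ennreal_ofReal)
  gcongr
  exact Ilam_le_lintegral_mul_enorm_sub_rpow hlam0.le f Y
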